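/- Let n ≥ 1. For each i = 1,…,n let p_i : ℝ → ℝ be a strictly positive probability density on ℝ whose logarithm is twice continuously differentiable, and suppose at most one index i has (log p_i)'' constant. Let A be an n×n real orthogonal matrix (AᵀA = I) and let μ be the product measure on ℝⁿ whose i-th coordinate has density p_i. If the pushforward of μ under the linear map x ↦ A x is itself a product measure, then A has exactly one nonzero entry in each row and each column. -/

import Mathlib

open MeasureTheory Matrix Real

/-!
Put `B = A⁻¹`, so that the mixed vector has density `|det B| * ∏ i, p i ((B *ᵥ y) i)`. A continuous
density of a product measure is a product of functions of one coordinate: comparing the masses of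
small cubes, which needs no density for the factors, shows that exchanging one coordinate of two
points does not change the product of the two values. Mixed second differences of the logarithm
therefore vanish, that is, for `k ≠ l`,
`∑ i, Δ_[B i k * s] (Δ_[B i l * t] (log ∘ p i)) (x i) = 0`, where `x` is arbitrary because `B` is
invertible. Each summand is then constant in `x i`, and if `B i k` and `B i l` are both nonzero this
forces `log ∘ p i` to be quadratic. At the one index where it may be quadratic, with leading
coefficient `a`, the sum reduces to `2 * a * (B i k * s) * (B i l * t) = 0`, and `a ≠ 0` because
`p i` is integrable. So no row of `B` has two nonzero entries, and both `B` and `A` are monomial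
matrices.
-/

open Filter Metric Topology
open scoped ENNReal fwdDiff

section ProductMeasure

theorem exists_forall_mem_imp_measure_ne_zero {Y κ : Type*} [Countable κ] [MeasurableSpace Y]
    {μ : Measure Y} (hμ : μ ≠ 0) (s : κ → Set Y) : ∃ y, ∀ m, y ∈ s m → μ (s m) ≠ 0 := by
  have : (ae μ).NeBot := ae_neBot.2 hμ
  refine (ae_all_iff.2 fun m => ?_ : ∀ᵐ y ∂μ, ∀ m, y ∈ s m → μ (s m) ≠ 0).exists
  by_cases hm : μ (s m) = 0
  · filter_upwards [measure_eq_zero_iff_ae_notMem.1 hm] with y hy hy' using absurd hy' hy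
  · exact ae_of_all _ fun _ _ => hm

theorem withDensity_ofReal_ne_zero {Y : Type*} [MeasurableSpace Y] {μ : Measure Y} [NeZero μ]
    {g : Y → ℝ} (hg : AEMeasurable g μ) (hpos : ∀ y, 0 < g y) :
    μ.withDensity (fun y => ENNReal.ofReal (g y)) ≠ 0 := by
  rw [Ne, withDensity_eq_zero_iff hg.ennreal_ofReal]
  intro h
  obtain ⟨y, hy⟩ := h.exists
  exact (ENNReal.ofReal_pos.2 (hpos y)).ne' hy

theorem tendsto_withDensity_closedBall_div {Y : Type*} [PseudoMetricSpace Y] [ProperSpace Y]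
    [MeasurableSpace Y] [OpensMeasurableSpace Y] (μ : Measure Y) [μ.IsOpenPosMeasure]
    [IsFiniteMeasureOnCompacts μ] {g : Y → ℝ≥0∞} {y : Y} (hg : ContinuousAt g y)
    (hy : g y ≠ ∞) :
    Tendsto (fun r => μ.withDensity g (closedBall y r) / μ (closedBall y r)) (𝓝[>] 0)
      (𝓝 (g y)) := by
  rw [ENNReal.tendsto_nhds hy]
  intro ε hε
  obtain ⟨δ, hδ, hball⟩ :=
    eventually_nhds_iff_ball.1 ((ENNReal.tendsto_nhds hy).1 hg.tendsto ε hε)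
  filter_upwards [Ioo_mem_nhdsGT hδ] with r hr
  have hbound : ∀ x ∈ closedBall y r, g x ∈ Set.Icc (g y - ε) (g y + ε) := fun x hx =>
    hball x (closedBall_subset_ball hr.2 hx)
  have hpos : μ (closedBall y r) ≠ 0 := (measure_closedBall_pos _ _ hr.1).ne'
  have hfin : μ (closedBall y r) ≠ ∞ := measure_closedBall_lt_top.ne
  rw [withDensity_apply _ measurableSet_closedBall]
  constructor
  · rw [ENNReal.le_div_iff_mul_le (.inl hpos) (.inl hfin), ← setLIntegral_const]
    exact setLIntegral_mono' measurableSet_closedBall fun x hx => (hbound x hx).1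
  · rw [ENNReal.div_le_iff hpos hfin, ← setLIntegral_const]
    exact setLIntegral_mono' measurableSet_closedBall fun x hx => (hbound x hx).2

theorem map_withDensity_comp {Y Z : Type*} [MeasurableSpace Y] [MeasurableSpace Z] (μ : Measure Y)
    {φ : Y → Z} (hφ : Measurable φ) {g : Z → ℝ≥0∞} (hg : Measurable g) :
    Measure.map φ (μ.withDensity (g ∘ φ)) = (Measure.map φ μ).withDensity g := by
  ext s hs
  rw [Measure.map_apply hφ hs, withDensity_apply _ (hφ hs), withDensity_apply _ hs,
    setLIntegral_map hs hg hφ]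
  rfl

variable {ι : Type*} [Fintype ι] {X : ι → Type*} [∀ i, MeasurableSpace (X i)]

theorem ne_zero_of_pi_ne_zero (ν : ∀ i, Measure (X i)) (h : Measure.pi ν ≠ 0) (i : ι) :
    ν i ≠ 0 := by
  contrapose! h
  rw [← Measure.measure_univ_eq_zero, Measure.pi, toMeasure_apply _ _ MeasurableSet.univ,
    ← Set.pi_univ, ← nonpos_iff_eq_zero]
  refine (OuterMeasure.pi_pi_le _ _).trans_eq (Finset.prod_eq_zero (Finset.mem_univ i) ?_)
  simp [h]

theorem exists_cover_prod_eval_image_lt_top (ν : ∀ i, Measure (X i))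
    [IsFiniteMeasure (Measure.pi ν)] :
    ∃ t : ℕ → Set (∀ i, X i), ⋃ m, t m = Set.univ ∧
      ∀ m, (t m).Nonempty → ∏ i, ν i (Function.eval i '' t m) < ∞ := by
  have hfin := measure_lt_top (Measure.pi ν) Set.univ
  rw [Measure.pi, toMeasure_apply _ _ MeasurableSet.univ, OuterMeasure.pi,
    OuterMeasure.boundedBy_apply] at hfin
  simp only [iInf_lt_iff] at hfin
  obtain ⟨t, hcover, hsum⟩ := hfin
  refine ⟨t, Set.univ_subset_iff.1 hcover, fun m hm => ?_⟩
  simpa [hm, piPremeasure] using (ENNReal.le_tsum m).trans_lt hsum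

theorem sigmaFinite_of_isFiniteMeasure_pi (ν : ∀ i, Measure (X i)) [IsFiniteMeasure (Measure.pi ν)]
    (h0 : Measure.pi ν ≠ 0) (i : ι) : SigmaFinite (ν i) := by
  classical
  obtain ⟨t, hcover, hfin⟩ := exists_cover_prod_eval_image_lt_top ν
  choose x hx using fun j =>
    exists_forall_mem_imp_measure_ne_zero (ne_zero_of_pi_ne_zero ν h0 j)
      fun m => Function.eval j '' t m
  let S : Set (Set (X i)) := {s | ν i s < ∞} ∩ Set.range fun m => Function.eval i '' t m
  refine Measure.sigmaFinite_of_countable (S := S) ((Set.countable_range _).mono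
    Set.inter_subset_right) (fun s hs => hs.1) (Set.eq_univ_of_forall fun a => ?_)
  -- Off coordinate `i` the point `update x i a` avoids every null projection, so in a piece
  -- containing it the factor with index `i` is multiplied by nonzero factors only.
  obtain ⟨m, hm⟩ := Set.mem_iUnion.1 (hcover.symm ▸ Set.mem_univ (Function.update x i a))
  refine ⟨_, ⟨?_, m, rfl⟩, _, hm, Function.update_self ..⟩
  have hprod := hfin m ⟨_, hm⟩
  rw [← Finset.mul_prod_erase _ _ (Finset.mem_univ i)] at hprod
  refine ENNReal.lt_top_of_mul_ne_top_left hprod.ne (Finset.prod_ne_zero_iff.2 fun j hj => ?_)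
  exact hx j m ⟨_, hm, Function.update_of_ne (Finset.ne_of_mem_erase hj) ..⟩

theorem pi_withDensity_ofReal (ν : ∀ i, Measure (X i)) [∀ i, SigmaFinite (ν i)]
    {p : ∀ i, X i → ℝ} (hp : ∀ i t, 0 ≤ p i t) (hpint : ∀ i, Integrable (p i) (ν i)) :
    Measure.pi (fun i => (ν i).withDensity fun t => ENNReal.ofReal (p i t)) =
      (Measure.pi ν).withDensity fun x => ENNReal.ofReal (∏ i, p i (x i)) := by
  have (i : ι) : IsFiniteMeasure ((ν i).withDensity fun t => ENNReal.ofReal (p i t)) :=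
    isFiniteMeasure_withDensity_ofReal (hpint i).2
  refine Measure.pi_eq fun s hs => ?_
  have hpints (i : ι) : Integrable (p i) ((ν i).restrict (s i)) := (hpint i).restrict
  calc (Measure.pi ν).withDensity (fun x => ENNReal.ofReal (∏ i, p i (x i))) (Set.univ.pi s)
    _ = ENNReal.ofReal (∫ x, ∏ i, p i (x i) ∂Measure.pi fun i => (ν i).restrict (s i)) := by
      rw [withDensity_apply _ (MeasurableSet.univ_pi hs), Measure.restrict_pi_pi,
        ← ofReal_integral_eq_lintegral_ofReal (.fintype_prod_dep hpints)
          (ae_of_all _ fun x => Finset.prod_nonneg fun i _ => hp i _)]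
    _ = ∏ i, ENNReal.ofReal (∫ t in s i, p i t ∂ν i) := by
      rw [integral_fintype_prod_eq_prod,
        ENNReal.ofReal_prod_of_nonneg fun i _ => integral_nonneg (hp i)]
    _ = ∏ i, (ν i).withDensity (fun t => ENNReal.ofReal (p i t)) (s i) := by
      refine Finset.prod_congr rfl fun i _ => ?_
      rw [withDensity_apply _ (hs i),
        ofReal_integral_eq_lintegral_ofReal (hpints i) (ae_of_all _ (hp i))]

theorem sigmaFinite_of_map_pi_withDensity_eq_pi (μ : ∀ i, Measure (X i)) [∀ i, SigmaFinite (μ i)]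
    [∀ i, NeZero (μ i)] {p : ∀ i, X i → ℝ} (hpos : ∀ i t, 0 < p i t)
    (hpint : ∀ i, Integrable (p i) (μ i)) {κ : Type*} [Fintype κ] {Z : κ → Type*}
    [∀ k, MeasurableSpace (Z k)] {ν : ∀ k, Measure (Z k)} {φ : (∀ i, X i) → ∀ k, Z k}
    (hφ : Measurable φ)
    (hν : Measure.map φ (Measure.pi fun i =>
      (μ i).withDensity fun t => ENNReal.ofReal (p i t)) = Measure.pi ν) (k : κ) :
    SigmaFinite (ν k) := by
  have (i : ι) : IsFiniteMeasure ((μ i).withDensity fun t => ENNReal.ofReal (p i t)) :=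
    isFiniteMeasure_withDensity_ofReal (hpint i).2
  have : IsFiniteMeasure (Measure.pi ν) := hν ▸ inferInstance
  have : NeZero (Measure.pi μ) := ⟨fun h => by
    simp [← Measure.measure_univ_eq_zero, Measure.pi_univ, Finset.prod_eq_zero_iff, NeZero.ne] at h⟩
  refine sigmaFinite_of_isFiniteMeasure_pi ν ?_ k
  rw [← hν, Measure.map_ne_zero_iff hφ.aemeasurable,
    pi_withDensity_ofReal _ (fun i t => (hpos i t).le) hpint]
  exact withDensity_ofReal_ne_zero (Integrable.fintype_prod_dep hpint).1.aemeasurable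
    fun x => Finset.prod_pos fun i _ => hpos i _

variable [DecidableEq ι]

theorem pi_closedBall_mul_pi_closedBall_update [∀ i, PseudoMetricSpace (X i)]
    (ν : ∀ i, Measure (X i)) [∀ i, SigmaFinite (ν i)] (y z : ∀ i, X i) (k : ι) {r : ℝ}
    (hr : 0 ≤ r) :
    Measure.pi ν (closedBall (Function.update y k (z k)) r) *
        Measure.pi ν (closedBall (Function.update z k (y k)) r) =
      Measure.pi ν (closedBall y r) * Measure.pi ν (closedBall z r) := by
  simp only [closedBall_pi _ hr, Measure.pi_pi, ← Finset.prod_mul_distrib]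
  refine Finset.prod_congr rfl fun i _ => ?_
  obtain rfl | hi := eq_or_ne i k
  · simp [mul_comm]
  · simp [hi]

theorem update_mul_update_of_withDensity_pi_eq_pi [∀ i, PseudoMetricSpace (X i)]
    [∀ i, ProperSpace (X i)] [∀ i, SecondCountableTopology (X i)] [∀ i, BorelSpace (X i)]
    (μ ν : ∀ i, Measure (X i)) [∀ i, SigmaFinite (μ i)] [∀ i, (μ i).IsOpenPosMeasure]
    [∀ i, IsLocallyFiniteMeasure (μ i)] [∀ i, SigmaFinite (ν i)] {g : (∀ i, X i) → ℝ≥0∞}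
    (hg : Continuous g) (hfin : ∀ x, g x ≠ ∞)
    (h : (Measure.pi μ).withDensity g = Measure.pi ν) (y z : ∀ i, X i) (k : ι) :
    g (Function.update y k (z k)) * g (Function.update z k (y k)) = g y * g z := by
  have hlim (a b : ∀ i, X i) : Tendsto (fun r =>
      Measure.pi ν (closedBall a r) * Measure.pi ν (closedBall b r) /
        (Measure.pi μ (closedBall a r) * Measure.pi μ (closedBall b r))) (𝓝[>] 0)
      (𝓝 (g a * g b)) := by
    refine (ENNReal.Tendsto.mul
      (tendsto_withDensity_closedBall_div (Measure.pi μ) hg.continuousAt (hfin a))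
      (.inr (hfin b))
      (tendsto_withDensity_closedBall_div (Measure.pi μ) hg.continuousAt (hfin b))
      (.inr (hfin a))).congr' ?_
    filter_upwards [self_mem_nhdsWithin] with r hr
    rw [h, ENNReal.mul_div_mul_comm (.inl (measure_closedBall_pos _ _ hr).ne')
      (.inl measure_closedBall_lt_top.ne)]
  refine tendsto_nhds_unique_of_eventuallyEq (hlim _ _) (hlim y z) ?_
  filter_upwards [self_mem_nhdsWithin] with r hr
  rw [pi_closedBall_mul_pi_closedBall_update ν y z k (le_of_lt hr),
    pi_closedBall_mul_pi_closedBall_update μ y z k (le_of_lt hr)]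

end ProductMeasure

section Quadratic

/-- A function on the line that is a polynomial of degree at most two. A positive
probability density is Gaussian exactly when its logarithm has this form. -/
def IsQuadratic (f : ℝ → ℝ) : Prop :=
  ∃ a b c : ℝ, ∀ t, f t = a * t ^ 2 + b * t + c

theorem IsQuadratic.exists_deriv_deriv_eq {f : ℝ → ℝ} (hf : IsQuadratic f) :
    ∃ c, ∀ t, deriv (deriv f) t = c := by
  obtain ⟨a, b, c, h⟩ := hf
  have hderiv (t : ℝ) : HasDerivAt f (2 * a * t + b) t := by
    rw [funext h]
    convert! (((hasDerivAt_pow 2 t).const_mul a).add ((hasDerivAt_id t).const_mul b)).add_const c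
      using 1
    norm_num
    ring
  refine ⟨2 * a, fun t => ?_⟩
  rw [funext fun t => (hderiv t).deriv]
  simp

theorem apply_eq_mul_apply_one_of_continuous {g : ℝ → ℝ} (hg : Continuous g)
    (hadd : ∀ x y, g (x + y) = g x + g y) (x : ℝ) : g x = x * g 1 := by
  simpa using map_real_smul (AddMonoidHom.mk' g hadd) hg x 1

theorem isQuadratic_of_fwdDiff_fwdDiff_const {f : ℝ → ℝ} (hf : Continuous f)
    (h : ∀ s t x y, Δ_[s] (Δ_[t] f) x = Δ_[s] (Δ_[t] f) y) : IsQuadratic f := by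
  let D (s t : ℝ) : ℝ := Δ_[s] (Δ_[t] f) 0
  have hD (s t : ℝ) : D s t = f (s + t) - f s - f t + f 0 := by
    simp only [D, fwdDiff, zero_add]; ring
  have hlin (s t : ℝ) : D s t = s * D 1 t := by
    refine apply_eq_mul_apply_one_of_continuous (g := fun s => D s t) ?_ (fun r s => ?_) s
    · simp only [hD]; fun_prop
    · have := h s t r 0
      simp only [D, fwdDiff, zero_add] at this ⊢
      linarith
  have hbilin (s t : ℝ) : D s t = s * t * D 1 1 := by
    rw [hlin, mul_assoc, ← hlin t 1, hD, hD, add_comm 1 t]; ring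
  have hrest (x : ℝ) : f x - f 0 - D 1 1 / 2 * x ^ 2 = x * (f 1 - f 0 - D 1 1 / 2 * 1 ^ 2) := by
    refine apply_eq_mul_apply_one_of_continuous
      (g := fun x => f x - f 0 - D 1 1 / 2 * x ^ 2) (by fun_prop) (fun x y => ?_) x
    linear_combination hbilin x y - hD x y
  exact ⟨D 1 1 / 2, f 1 - f 0 - D 1 1 / 2 * 1 ^ 2, f 0, fun x => by linear_combination hrest x⟩

theorem not_integrable_exp_affine (b c : ℝ) : ¬ Integrable fun t : ℝ => exp (b * t + c) := by
  intro h
  have hbound (t : ℝ) : exp c ≤ exp (b * t + c) + exp (b * -t + c) := by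
    have h := two_mul_le_add_sq (exp ((b * t + c) / 2)) (exp ((b * -t + c) / 2))
    simp only [mul_assoc, ← exp_add, ← exp_nat_mul] at h
    ring_nf at h ⊢
    linarith [exp_pos c]
  have hconst : Integrable fun _ : ℝ => exp c :=
    (h.add h.comp_neg).mono' aestronglyMeasurable_const (ae_of_all _ fun t => by
      simpa using hbound t)
  simp [integrable_const_iff, isFiniteMeasure_iff] at hconst

end Quadratic

theorem apply_eq_apply_of_sum_apply_eq_const {ι α M : Type*} [Fintype ι] [AddCancelCommMonoid M]
    {g : ι → α → M} {c : M} (h : ∀ x : ι → α, ∑ i, g i (x i) = c) (i : ι) (a b : α) :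
    g i a = g i b := by
  classical
  have hsum (x : α) : g i x + ∑ j ∈ Finset.univ.erase i, g j b = c := by
    rw [← h (Function.update (fun _ => b) i x), ← Finset.add_sum_erase _ _ (Finset.mem_univ i),
      Function.update_self]
    congr 1
    refine Finset.sum_congr rfl fun j hj => ?_
    rw [Function.update_of_ne (Finset.ne_of_mem_erase hj)]
  exact add_right_cancel ((hsum a).trans (hsum b).symm)

theorem exists_perm_ne_zero_iff_of_mul_eq_one {ι R : Type*} [Fintype ι] [DecidableEq ι]
    [Semiring R] [Nontrivial R] [NoZeroDivisors R] {A B : Matrix ι ι R} (hBA : B * A = 1)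
    (hB : ∀ i k l, k ≠ l → B i k * B i l = 0) :
    ∃ σ : Equiv.Perm ι, ∀ k l, A k l ≠ 0 ↔ σ l = k := by
  have hrow (i : ι) : ∃ k, B i k ≠ 0 := by
    by_contra! h
    simpa [mul_apply, h] using congrFun₂ hBA i i
  choose σ hσ using hrow
  have hone (i j : ι) : B i (σ i) * A (σ i) j = (1 : Matrix ι ι R) i j := by
    rw [← hBA, mul_apply, Finset.sum_eq_single (σ i)]
    · intro k _ hk
      rw [(mul_eq_zero.1 (hB i k (σ i) hk)).resolve_right (hσ i), zero_mul]
    · simp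
  have hA (i j : ι) : A (σ i) j ≠ 0 ↔ i = j := by
    rw [← (mul_ne_zero_iff_left (hσ i))]
    simp [hone, one_apply]
  have hinj : Function.Injective σ := fun i j hij => (hA i j).1 (hij ▸ (hA j j).2 rfl)
  refine ⟨Equiv.ofBijective σ (Finite.injective_iff_bijective.1 hinj), fun k l => ?_⟩
  obtain ⟨i, rfl⟩ := (Finite.injective_iff_surjective.1 hinj) k
  rw [hA, Equiv.ofBijective_apply, hinj.eq_iff, eq_comm]

variable {ι : Type*} [Fintype ι] [DecidableEq ι]

theorem map_mulVec_withDensity {A : Matrix ι ι ℝ} (hA : IsUnit A) {g : (ι → ℝ) → ℝ≥0∞}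
    (hg : Measurable g) :
    Measure.map A.mulVec (volume.withDensity g) =
      volume.withDensity fun y => ENNReal.ofReal |A⁻¹.det| * g (A⁻¹ *ᵥ y) := by
  have hdet : IsUnit A.det := (isUnit_iff_isUnit_det A).1 hA
  have hmeas (M : Matrix ι ι ℝ) : Measurable M.mulVec :=
    (Continuous.matrix_mulVec continuous_const continuous_id).measurable
  have hvol : Measure.map A.mulVec volume = ENNReal.ofReal |A⁻¹.det| • volume := by
    rw [det_nonsing_inv, Ring.inverse_eq_inv']
    exact Real.map_matrix_volume_pi_eq_smul_volume_pi hdet.ne_zero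
  have hcomp : g = (fun y => g (A⁻¹ *ᵥ y)) ∘ A.mulVec := by
    ext x; simp [mulVec_mulVec, nonsing_inv_mul A hdet]
  have hginv : Measurable fun y => g (A⁻¹ *ᵥ y) := hg.comp (hmeas _)
  conv_lhs => rw [hcomp]
  rw [map_withDensity_comp _ (hmeas A) hginv, hvol, withDensity_smul_measure,
    ← withDensity_smul _ hginv]
  rfl

theorem fwdDiff_fwdDiff_log_eq_zero_of_withDensity_eq_pi {g : (ι → ℝ) → ℝ} (hg : Continuous g)
    (hpos : ∀ x, 0 < g x) (ν : ι → Measure ℝ) [∀ i, SigmaFinite (ν i)]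
    (h : volume.withDensity (fun x => ENNReal.ofReal (g x)) = Measure.pi ν) {k l : ι}
    (hkl : k ≠ l) (s t : ℝ) (x : ι → ℝ) :
    Δ_[Pi.single k s] (Δ_[Pi.single l t] fun y => log (g y)) x = 0 := by
  let y := x + Pi.single k s + Pi.single l t
  have hy : Function.update y k (x k) = x + Pi.single l t := by
    ext j; obtain rfl | hj := eq_or_ne j k <;> simp [y, *]
  have hx : Function.update x k (y k) = x + Pi.single k s := by
    ext j; obtain rfl | hj := eq_or_ne j k <;> simp [y, *]
  have hswap := update_mul_update_of_withDensity_pi_eq_pi (fun _ => volume) ν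
    (ENNReal.continuous_ofReal.comp hg) (fun _ => ENNReal.ofReal_ne_top) h y x k
  have hmul : g (x + Pi.single l t) * g (x + Pi.single k s) = g y * g x := by
    simpa [hx, hy, ← ENNReal.ofReal_mul, ENNReal.ofReal_eq_ofReal_iff, (hpos _).le, mul_nonneg]
      using hswap
  have hlog := congrArg log hmul
  rw [log_mul (hpos _).ne' (hpos _).ne', log_mul (hpos _).ne' (hpos _).ne'] at hlog
  simp only [fwdDiff]
  linear_combination -hlog

section IndependentComponents

variable {p : ι → ℝ → ℝ} {A : Matrix ι ι ℝ} {ν : ι → Measure ℝ}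

theorem map_mulVec_pi_withDensity (hpos : ∀ i t, 0 < p i t) (hcont : ∀ i, Continuous (p i))
    (hpint : ∀ i, Integrable (p i)) (hA : IsUnit A) :
    Measure.map A.mulVec (Measure.pi fun i => volume.withDensity fun t => ENNReal.ofReal (p i t)) =
      volume.withDensity fun y =>
        ENNReal.ofReal (|A⁻¹.det| * ∏ i, p i ((A⁻¹ *ᵥ y) i)) := by
  have hprod : Measurable fun x : ι → ℝ => ENNReal.ofReal (∏ i, p i (x i)) :=
    (ENNReal.continuous_ofReal.comp (by fun_prop)).measurable
  rw [pi_withDensity_ofReal _ (fun i t => (hpos i t).le) hpint, ← volume_pi,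
    map_mulVec_withDensity hA hprod]
  simp [ENNReal.ofReal_mul]

variable (hpos : ∀ i t, 0 < p i t) (hcont : ∀ i, Continuous (p i)) (hpint : ∀ i, Integrable (p i))
  (hA : IsUnit A)
  (hν : Measure.map A.mulVec
    (Measure.pi fun i => volume.withDensity fun t => ENNReal.ofReal (p i t)) = Measure.pi ν)

include hpos hcont hpint hA hν

theorem sum_fwdDiff_fwdDiff_log_eq_zero {k l : ι} (hkl : k ≠ l) (s t : ℝ) (x : ι → ℝ) :
    ∑ i, Δ_[A⁻¹ i k * s] (Δ_[A⁻¹ i l * t] fun u => log (p i u)) (x i) = 0 := by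
  have hAdet : IsUnit A.det := (isUnit_iff_isUnit_det A).1 hA
  have hdet : 0 < |A⁻¹.det| := abs_pos.2 (isUnit_nonsing_inv_det A hAdet).ne_zero
  have hprod (x : ι → ℝ) : 0 < ∏ i, p i (x i) := Finset.prod_pos fun i _ => hpos i _
  have (i : ι) : SigmaFinite (ν i) := sigmaFinite_of_map_pi_withDensity_eq_pi _ hpos hpint
    (Continuous.matrix_mulVec continuous_const continuous_id).measurable hν i
  rw [map_mulVec_pi_withDensity hpos hcont hpint hA] at hν
  have h := fwdDiff_fwdDiff_log_eq_zero_of_withDensity_eq_pi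
    (by fun_prop) (fun y => mul_pos hdet (hprod _)) ν hν hkl s t (A *ᵥ x)
  have hlog (x : ι → ℝ) :
      log (|A⁻¹.det| * ∏ i, p i (x i)) = log |A⁻¹.det| + ∑ i, log (p i (x i)) := by
    rw [log_mul hdet.ne' (hprod _).ne', log_prod fun i _ => (hpos i _).ne']
  simp only [fwdDiff, hlog, mulVec_add, mulVec_mulVec, nonsing_inv_mul A hAdet, one_mulVec,
    mulVec_single, Pi.add_apply, Pi.smul_apply, col_apply, MulOpposite.smul_eq_mul_unop,
    MulOpposite.unop_op] at h
  simp only [fwdDiff, Finset.sum_sub_distrib]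
  linear_combination h

theorem isQuadratic_log_of_inv_mul_inv_ne_zero {i k l : ι} (hkl : k ≠ l)
    (hi : A⁻¹ i k * A⁻¹ i l ≠ 0) : IsQuadratic fun t => log (p i t) := by
  refine isQuadratic_of_fwdDiff_fwdDiff_const
    ((hcont i).log fun t => (hpos i t).ne') fun s t x y => ?_
  have h := apply_eq_apply_of_sum_apply_eq_const
    (sum_fwdDiff_fwdDiff_log_eq_zero hpos hcont hpint hA hν hkl (s / A⁻¹ i k) (t / A⁻¹ i l)) i x y
  rwa [mul_div_cancel₀ _ (left_ne_zero_of_mul hi),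
    mul_div_cancel₀ _ (right_ne_zero_of_mul hi)] at h

theorem inv_mul_inv_eq_zero_of_subsingleton_isQuadratic
    (hquad : {i | IsQuadratic fun t => log (p i t)}.Subsingleton) (i : ι) {k l : ι}
    (hkl : k ≠ l) : A⁻¹ i k * A⁻¹ i l = 0 := by
  by_contra hi
  have hqi := isQuadratic_log_of_inv_mul_inv_ne_zero hpos hcont hpint hA hν hkl hi
  have hzero (j : ι) (hji : j ≠ i) : A⁻¹ j k * A⁻¹ j l = 0 := by
    by_contra hj
    exact hji (hquad (isQuadratic_log_of_inv_mul_inv_ne_zero hpos hcont hpint hA hν hkl hj) hqi)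
  obtain ⟨a, b, c, habc⟩ := hqi
  beta_reduce at habc
  have hsum := sum_fwdDiff_fwdDiff_log_eq_zero hpos hcont hpint hA hν hkl 1 1 0
  rw [Fintype.sum_eq_single i fun j hji => by
    obtain h0 | h0 := mul_eq_zero.1 (hzero j hji) <;> simp [fwdDiff, h0]] at hsum
  have ha : a = 0 := by
    have : 2 * a * (A⁻¹ i k * A⁻¹ i l) = 0 := by
      simp only [fwdDiff, habc] at hsum
      linear_combination hsum
    simpa [hi] using this
  have hexp (t : ℝ) : p i t = exp (b * t + c) := by
    rw [← exp_log (hpos i t), habc, ha, zero_mul, zero_add]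
  exact not_integrable_exp_affine b c ((hpint i).congr (ae_of_all _ hexp))

end IndependentComponents

theorem linear_ICA_identifiability_orthogonal_general {p : ι → ℝ → ℝ} (hpos : ∀ i t, 0 < p i t)
    (hcont : ∀ i, Continuous (p i)) (hpint : ∀ i, Integrable (p i))
    (hquad : {i | IsQuadratic fun t => log (p i t)}.Subsingleton)
    {A : Matrix ι ι ℝ} (hA : IsUnit A)
    (hprod : ∃ ν : ι → Measure ℝ, Measure.map A.mulVec
      (Measure.pi fun i => volume.withDensity fun t => ENNReal.ofReal (p i t)) = Measure.pi ν) :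
    (∀ k, ∃! l, A k l ≠ 0) ∧ (∀ l, ∃! k, A k l ≠ 0) := by
  obtain ⟨ν, hν⟩ := hprod
  obtain ⟨σ, hσ⟩ := exists_perm_ne_zero_iff_of_mul_eq_one
    (nonsing_inv_mul A ((isUnit_iff_isUnit_det A).1 hA)) fun i _ _ =>
      inv_mul_inv_eq_zero_of_subsingleton_isQuadratic hpos hcont hpint hA hν hquad i
  simp only [hσ]
  exact ⟨σ.bijective.existsUnique, fun l => existsUnique_eq'⟩

/-- Identifiability of linear ICA with an orthogonal mixing matrix: if the
independent components have smooth strictly positive densities, at most one of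
them has constant second log-derivative (at most one Gaussian), and an orthogonal
mixing of them again has independent coordinates (the pushforward is a product
measure), then the mixing matrix has exactly one nonzero entry in each row and
each column. -/
theorem linear_ICA_identifiability_orthogonal
    (n : ℕ) (hn : 1 ≤ n)
    (p : Fin n → ℝ → ℝ)
    (hpos : ∀ i, ∀ t : ℝ, 0 < p i t)
    (hdens : ∀ i, ∫ t : ℝ, p i t = 1)
    (hsmooth : ∀ i, ContDiff ℝ 2 (fun t => Real.log (p i t)))
    (hgauss : ∀ i j : Fin n,
      (∃ c : ℝ, ∀ t : ℝ, deriv (deriv (fun s => Real.log (p i s))) t = c) →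
      (∃ c : ℝ, ∀ t : ℝ, deriv (deriv (fun s => Real.log (p j s))) t = c) →
      i = j)
    (A : Matrix (Fin n) (Fin n) ℝ) (hA : Aᵀ * A = 1)
    (μ : Measure (Fin n → ℝ))
    (hμ : μ = Measure.pi (fun i => volume.withDensity (fun t => ENNReal.ofReal (p i t))))
    (hprod : ∃ ν : Fin n → Measure ℝ,
      Measure.map (fun x => A.mulVec x) μ = Measure.pi ν) :
    (∀ k : Fin n, ∃! l : Fin n, A k l ≠ 0) ∧
    (∀ l : Fin n, ∃! k : Fin n, A k l ≠ 0) := by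
  have hcont (i : Fin n) : Continuous (p i) :=
    (hsmooth i).continuous.rexp.congr fun t => exp_log (hpos i t)
  exact linear_ICA_identifiability_orthogonal_general hpos hcont
    (fun i => integrable_of_integral_eq_one (hdens i))
    (fun i hi j hj => hgauss i j hi.exists_deriv_deriv_eq hj.exists_deriv_deriv_eq)
    (IsUnit.of_mul_eq_one_right _ hA) (hμ ▸ hprod)
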